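/- arXiv:1912.09052 — 2 statements merged into one kernel-verified Lean document; each statement's English description precedes it below -/
import Mathlib

section
/- Let C be a countable index set and for each e ∈ C let 𝒰_e ⊆ 2^ω. If the intersection ⋂_{e∈C} 𝒰_e is not large, then there exists a finite subset C̃ ⊆ C such that ⋂_{e∈C̃} 𝒰_e is not large. -/
/-- A class `U` of subsets of `ω` is `l`-large if for every `l`-partition `f : ω → l` there
exists `i < l` with `f⁻¹(i) ∈ U`. -/
def IsLargeL (l : ℕ) (U : Set (Set ℕ)) : Prop :=
  ∀ f : ℕ → Fin l, ∃ i : Fin l, f ⁻¹' {i} ∈ U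

/-- A class `U` of subsets of `ω` is large if it is `l`-large for every `l ≥ 1`. -/
def IsLarge (U : Set (Set ℕ)) : Prop :=
  ∀ l : ℕ, 1 ≤ l → IsLargeL l U

/-! A single partition `f : ω → l` witnesses the failure of largeness. It has only `l` pieces, and
each of them is missing from the intersection because it is missing from one `𝒰_e`; choosing such
an `e` for every piece gives at most `l` indices, for which the same `f` is still a witness. -/

theorem exists_finset_forall_notMem_biInter {α ι κ : Type*} [Finite κ] {C : Set ι}
    {U : ι → Set α} {a : κ → α} (h : ∀ k, a k ∉ ⋂ e ∈ C, U e) :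
    ∃ C' : Finset ι, ↑C' ⊆ C ∧ ∀ k, a k ∉ ⋂ e ∈ C', U e := by
  simp only [Set.mem_iInter₂, not_forall, exists_prop] at h
  choose e e_mem a_notMem using h
  refine ⟨(Set.finite_range e).toFinset, by simpa [Set.range_subset_iff] using e_mem, fun k hk ↦ ?_⟩
  exact a_notMem k (Set.mem_iInter₂.1 hk (e k) (by simp))

theorem exists_finset_not_isLargeL_biInter {ι : Type*} {l : ℕ} {C : Set ι} {U : ι → Set (Set ℕ)}
    (h : ¬ IsLargeL l (⋂ e ∈ C, U e)) :
    ∃ C' : Finset ι, ↑C' ⊆ C ∧ ¬ IsLargeL l (⋂ e ∈ C', U e) := by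
  obtain ⟨f, hf⟩ := not_forall.1 h
  obtain ⟨C', hC', hfC'⟩ := exists_finset_forall_notMem_biInter (not_exists.1 hf)
  exact ⟨C', hC', fun hlarge ↦ not_exists.2 hfC' (hlarge f)⟩

theorem not_large_of_finite_subset_general {ι : Type*} (C : Set ι) (U : ι → Set (Set ℕ))
    (h : ¬ IsLarge (⋂ e ∈ C, U e)) :
    ∃ C' : Finset ι, ↑C' ⊆ C ∧ ¬ IsLarge (⋂ e ∈ C', U e) := by
  obtain ⟨l, hl, hL⟩ : ∃ l, 1 ≤ l ∧ ¬ IsLargeL l (⋂ e ∈ C, U e) := by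
    simpa only [IsLarge, not_forall, exists_prop] using h
  obtain ⟨C', hC', hL'⟩ := exists_finset_not_isLargeL_biInter hL
  exact ⟨C', hC', fun hlarge ↦ hL' (hlarge l hl)⟩

/-- If `C` is a countable index set and `⋂_{e ∈ C} 𝒰_e` is not large, then
some finite subset `C̃ ⊆ C` already has `⋂_{e ∈ C̃} 𝒰_e` not large. -/
theorem not_large_of_finite_subset {ι : Type} [Countable ι]
    (C : Set ι) (U : ι → Set (Set ℕ)) (h : ¬ IsLarge (⋂ e ∈ C, U e)) :
    ∃ C' : Finset ι, ↑C' ⊆ C ∧ ¬ IsLarge (⋂ e ∈ C', U e) :=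
  not_large_of_finite_subset_general C U h
end

section
/- Let (C_n)_{n∈ω} be an increasing sequence of finite collections of upward closed subsets of 2^ω, and let (l_n)_{n∈ω} be a sequence of positive integers tending to infinity such that for every n, the intersection ⋂_{𝒰∈C_n} 𝒰 is l_n-large. Then the intersection ⋂_n ⋂_{𝒰∈C_n} 𝒰 is large. -/
/-!
For a fixed `k`, a `k`-partition fails to meet a decreasing intersection of classes only if each of
its finitely many parts leaves some class of the sequence, and then all of its parts lie outside one
common class. So `k`-largeness passes to decreasing intersections. It also descends from `l` to
`k ≤ l` for upward closed classes, since a `k`-partition is an `l`-partition with empty parts added.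
-/

namespace IsLargeL

theorem mono {l : ℕ} {U V : Set (Set ℕ)} (hUV : U ⊆ V) (hU : IsLargeL l U) : IsLargeL l V :=
  fun f => (hU f).imp fun _ hi => hUV hi

theorem of_le {k l : ℕ} {U : Set (Set ℕ)} (hup : IsUpperSet U) (hkl : k ≤ l)
    (hU : IsLargeL l U) : IsLargeL k U := by
  intro f
  have : Nonempty (Fin k) := ⟨f 0⟩
  let r : Fin l → Fin k := Function.invFun (Fin.castLE hkl)
  have hr : Function.LeftInverse r (Fin.castLE hkl) :=
    Function.leftInverse_invFun (Fin.castLE_injective hkl)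
  obtain ⟨i, hi⟩ := hU (Fin.castLE hkl ∘ f)
  have hsub : (Fin.castLE hkl ∘ f) ⁻¹' {i} ⊆ f ⁻¹' {r i} := by
    rintro x rfl
    exact (hr (f x)).symm
  exact ⟨r i, hup hsub hi⟩

theorem iInter_of_directed {ι : Type*} [Nonempty ι] {l : ℕ} {U : ι → Set (Set ℕ)}
    (hdir : Directed (· ⊇ ·) U) (hU : ∀ n, IsLargeL l (U n)) : IsLargeL l (⋂ n, U n) := by
  intro f
  by_contra! hout
  have hpart : ∀ i, ∃ n, f ⁻¹' {i} ∉ U n := fun i => by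
    simpa only [Set.mem_iInter, not_forall] using hout i
  choose m hm using hpart
  obtain ⟨N, hN⟩ : ∃ N, ∀ i, U N ⊆ U (m i) := hdir.finite_le m
  obtain ⟨i, hi⟩ := hU N f
  exact hm i (hN i hi)

end IsLargeL

theorem inter_large_of_increasing_large_general {ι : Type*} [Preorder ι] [IsDirectedOrder ι]
    [Nonempty ι] {U : ι → Set (Set ℕ)} (hanti : Antitone U) (hup : ∀ n, IsUpperSet (U n))
    {l : ι → ℕ} (hlim : ∀ k, ∃ᶠ n in Filter.atTop, k ≤ l n)
    (hlarge : ∀ n, IsLargeL (l n) (U n)) : IsLarge (⋂ n, U n) := by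
  intro k _
  refine IsLargeL.iInter_of_directed hanti.directed_ge fun n => ?_
  obtain ⟨m, hnm, hkm⟩ := Filter.frequently_atTop.mp (hlim k) n
  exact ((hlarge m).of_le (hup m) hkm).mono (hanti hnm)

/-- If `(C n)` is an increasing sequence of finite collections of upward
closed classes of subsets of `ω` and `(l n)` is a sequence of positive integers tending to
infinity such that `⋂ C n` is `l n`-large for every `n`, then `⋂_n ⋂ C n` is large. -/
theorem inter_large_of_increasing_large (C : ℕ → Set (Set (Set ℕ)))
    (hfin : ∀ n, (C n).Finite) (hmono : Monotone C)
    (hup : ∀ n, ∀ U ∈ C n, ∀ A B : Set ℕ, A ∈ U → A ⊆ B → B ∈ U)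
    (l : ℕ → ℕ) (hpos : ∀ n, 1 ≤ l n)
    (hlim : Filter.Tendsto l Filter.atTop Filter.atTop)
    (hlarge : ∀ n, IsLargeL (l n) (⋂₀ C n)) :
    IsLarge (⋂ n, ⋂₀ C n) := by
  have hupper (n : ℕ) : IsUpperSet (⋂₀ C n) :=
    isUpperSet_sInter fun U hU A B hAB hA => hup n U hU A B hA hAB
  exact inter_large_of_increasing_large_general (fun _ _ h => Set.sInter_subset_sInter (hmono h))
    hupper (fun k => (hlim.eventually_ge_atTop k).frequently) hlarge
end
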